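/- Let A be an n×n rate matrix, i a state, a := A e_i its i-th column, and ψ^i := diag(a) − a e_iᵀ − e_i aᵀ with seminorm ‖z‖_{M,i}² := zᵀ ψ^i z. Let f : ℝⁿ → ℝ satisfy f(z) = f(z') whenever ‖z−z'‖_{M,i} = 0, and suppose f is balanced at i, i.e. for all z, z' with ‖z−z'‖²_{M,i} ≠ 0 and every j ≠ i with a j > 0, (f(z) − f(z')) · ((z−z')·(e_j − e_i)) > −‖z−z'‖²_{M,i}. Then for all z, z' ∈ ℝⁿ such that a j · ((z−z')·(e_j − e_i)) ≥ 0 for every j, one has f(z) − f(z') ≥ −(z−z')·a, with equality only when ‖z−z'‖_{M,i} = 0. -/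

import Mathlib

/-!
Write `a = A e_i`, `w = z - z'` and `d j = w j - w i`. Since `a` sums to zero,
`‖w‖² = ∑ j, a j * d j ^ 2` and `w ⬝ᵥ a = ∑ j, a j * d j`, and by hypothesis every term
`a j * d j` is nonnegative. If `‖w‖² ≠ 0`, pick `m ≠ i` with `a m > 0` and `d m` maximal among
such states. Then `d m > 0` and `‖w‖² ≤ d m * (w ⬝ᵥ a)`, so the balance condition at `m` gives
`(f z - f z') * d m > -‖w‖² ≥ -(w ⬝ᵥ a) * d m`; dividing by `d m` yields the strict inequality.
-/

open Matrix BigOperators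

/-- An `n×n` real matrix is a rate matrix if its off-diagonal entries are nonnegative
and every column sums to zero. -/
def IsRateMatrix {n : ℕ} (A : Matrix (Fin n) (Fin n) ℝ) : Prop :=
  (∀ i j, i ≠ j → 0 ≤ A i j) ∧ (∀ j, ∑ i, A i j = 0)

/-- `ψ^i = diag(a) − a e_iᵀ − e_i aᵀ` where `a = A e_i`. -/
noncomputable def psi {n : ℕ} (A : Matrix (Fin n) (Fin n) ℝ) (i : Fin n) :
    Matrix (Fin n) (Fin n) ℝ :=
  Matrix.diagonal (A.mulVec (Pi.single i 1))
    - Matrix.vecMulVec (A.mulVec (Pi.single i 1)) (Pi.single i 1)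
    - Matrix.vecMulVec (Pi.single i 1) (A.mulVec (Pi.single i 1))

/-- The squared seminorm `‖z‖²_{M,i} = zᵀ ψ^i z`. -/
noncomputable def semiSq {n : ℕ} (A : Matrix (Fin n) (Fin n) ℝ) (i : Fin n)
    (z : Fin n → ℝ) : ℝ :=
  z ⬝ᵥ (psi A i).mulVec z

/-- Expanding the squares leaves an extra `w i ^ 2 * ∑ j, A j i`, which vanishes because the
`i`-th column of `A` sums to zero. -/
theorem semiSq_eq_sum {n : ℕ} (A : Matrix (Fin n) (Fin n) ℝ) (hA : IsRateMatrix A) (i : Fin n)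
    (w : Fin n → ℝ) : semiSq A i w = ∑ j, A j i * (w j - w i) ^ 2 := by
  have h1 : semiSq A i w = ∑ j, A j i * w j ^ 2 - 2 * w i * ∑ j, A j i * w j := by
    have e : ∑ j, w j * (A j i * w j) = ∑ j, A j i * w j ^ 2 :=
      Finset.sum_congr rfl fun j _ => by ring
    have e' : w ⬝ᵥ A.col i = ∑ j, A j i * w j :=
      Finset.sum_congr rfl fun j _ => by simp [mul_comm]
    have e'' : A.col i ⬝ᵥ w = ∑ j, A j i * w j := rfl
    have e3 : w ⬝ᵥ (Matrix.diagonal (A.col i)).mulVec w = ∑ j, A j i * w j ^ 2 := by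
      rw [← e]
      exact Finset.sum_congr rfl fun j _ => by simp [Matrix.mulVec_diagonal]
    simp only [semiSq, psi, Matrix.mulVec_single_one, Matrix.sub_mulVec, dotProduct_sub,
      Matrix.vecMulVec_mulVec, dotProduct_smul, e3, e', e'']
    simp
    ring
  have h2 : ∑ j, A j i * (w j - w i) ^ 2
      = ∑ j, A j i * w j ^ 2 - 2 * w i * ∑ j, A j i * w j + w i ^ 2 * ∑ j, A j i := by
    rw [Finset.mul_sum, Finset.mul_sum, ← Finset.sum_sub_distrib, ← Finset.sum_add_distrib]
    exact Finset.sum_congr rfl fun j _ => by ring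
  rw [h1, h2, hA.2 i]
  ring

theorem dotProduct_col_eq_sum {n : ℕ} (A : Matrix (Fin n) (Fin n) ℝ) (hA : IsRateMatrix A)
    (i : Fin n) (w : Fin n → ℝ) :
    w ⬝ᵥ A.mulVec (Pi.single i 1) = ∑ j, A j i * (w j - w i) := by
  have h : ∑ j, A j i * (w j - w i) = ∑ j, A j i * w j - w i * ∑ j, A j i := by
    rw [Finset.mul_sum, ← Finset.sum_sub_distrib]
    exact Finset.sum_congr rfl fun j _ => by ring
  rw [h, hA.2 i, Matrix.mulVec_single_one, mul_zero, sub_zero]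
  exact Finset.sum_congr rfl fun j _ => by simp [mul_comm]

/-- A balanced driver satisfies the one-sided comparison inequality without the `min` with 0. -/
theorem stmt3 {n : ℕ} (A : Matrix (Fin n) (Fin n) ℝ) (hA : IsRateMatrix A) (i : Fin n)
    (f : (Fin n → ℝ) → ℝ)
    (hf : ∀ z z' : Fin n → ℝ, semiSq A i (z - z') = 0 → f z = f z')
    (hbal : ∀ z z' : Fin n → ℝ, semiSq A i (z - z') ≠ 0 →
        ∀ j, j ≠ i → 0 < A.mulVec (Pi.single i 1) j →
          (f z - f z') * ((z - z') ⬝ᵥ (Pi.single j 1 - Pi.single i 1))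
            > - semiSq A i (z - z')) :
    ∀ z z' : Fin n → ℝ,
      (∀ j, 0 ≤ A.mulVec (Pi.single i 1) j *
          ((z - z') ⬝ᵥ (Pi.single j 1 - Pi.single i 1))) →
        f z - f z' ≥ -((z - z') ⬝ᵥ A.mulVec (Pi.single i 1)) ∧
        (f z - f z' = -((z - z') ⬝ᵥ A.mulVec (Pi.single i 1)) →
          semiSq A i (z - z') = 0) := by
  intro z z' hpos
  set w := z - z' with hw
  have ha : ∀ j, A.mulVec (Pi.single i 1) j = A j i := fun j => by simp
  have hd : ∀ j, w ⬝ᵥ (Pi.single j 1 - Pi.single i 1) = w j - w i := fun j => by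
    simp [dotProduct_sub]
  simp only [ha, hd] at hpos
  rw [dotProduct_col_eq_sum A hA i w]
  by_cases hS : semiSq A i w = 0
  · refine ⟨?_, fun _ => hS⟩
    have hT := Finset.sum_nonneg fun j (_ : j ∈ Finset.univ) => hpos j
    have := hf z z' hS
    linarith
  have hb := hbal z z' hS
  simp only [← hw, ha, hd] at hb
  rw [semiSq_eq_sum A hA i w] at hS hb
  suffices hlt : -(∑ j, A j i * (w j - w i)) < f z - f z' from
    ⟨hlt.le, fun h => absurd h hlt.ne'⟩
  obtain ⟨k, -, hk⟩ := Finset.exists_ne_zero_of_sum_ne_zero hS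
  have hki : k ≠ i := by
    rintro rfl
    simp at hk
  have hak : 0 < A k i := lt_of_le_of_ne (hA.1 k i hki) fun h => by simp [← h] at hk
  have hdk : 0 < w k - w i :=
    lt_of_le_of_ne (nonneg_of_mul_nonneg_right (hpos k) hak) fun h => by simp [← h] at hk
  obtain ⟨m, hm, hmax⟩ := Finset.exists_max_image
    (Finset.univ.filter fun j => j ≠ i ∧ 0 < A j i) (fun j => w j - w i) ⟨k, by simp [hki, hak]⟩
  simp only [Finset.mem_filter, Finset.mem_univ, true_and] at hm hmax
  have hdm : 0 < w m - w i := hdk.trans_le (hmax k ⟨hki, hak⟩)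
  have hle : ∑ j, A j i * (w j - w i) ^ 2 ≤ (∑ j, A j i * (w j - w i)) * (w m - w i) := by
    rw [Finset.sum_mul]
    refine Finset.sum_le_sum fun j _ => ?_
    rw [pow_two, ← mul_assoc]
    by_cases hj : j ≠ i ∧ 0 < A j i
    · exact mul_le_mul_of_nonneg_left (hmax j hj) (hpos j)
    · have h0 : A j i * (w j - w i) = 0 := by
        by_cases hji : j = i
        · simp [hji]
        · have : A j i = 0 := le_antisymm (not_lt.1 fun h => hj ⟨hji, h⟩) (hA.1 j i hji)
          simp [this]
      simp [h0]
  have hbm := hb m hm.1 hm.2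
  refine lt_of_mul_lt_mul_right ?_ hdm.le
  linarith
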